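/- arXiv:2303.10576 — 3 statements merged into one kernel-verified Lean document; each statement's English description precedes it below -/
import Mathlib

section
/- For every integer k ≥ 2 and all ℓ, ℓ' ∈ {0,1,...,k+1} with ℓ ≡ ℓ' (mod 2), the CFI graphs G_k^{(ℓ)} and G_k^{(ℓ')} are isomorphic as simple graphs. In particular, G_k^{(ℓ)} is isomorphic to G_k^{(ℓ+2)} for every ℓ ∈ {0,1,...,k−1}. -/
/-!
Switching the bit that a vertex `(a, v)` carries for a fixed edge `{s, s + 1}` of the complete
graph on `Fin (k + 1)`, at both of its endpoints, preserves the adjacency relation: that relation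
only compares the two bits carried for a common edge. It changes the parity of `v` exactly for
`a = s` and `a = s + 1`. With `s = k - ℓ - 1` these are the two positions whose prescribed parity
differs between `G_k^{(ℓ)}` and `G_k^{(ℓ+2)}`, so the two graphs are isomorphic (`cfi_step`);
iterating gives the theorem.
-/

/-- Number of `1`-bits (`true` entries) in a bit string `v : Fin k → Bool`. -/
def cfiOnes {k : ℕ} (v : Fin k → Bool) : ℕ :=
  (Finset.univ.filter fun i => v i = true).card

/-- Vertex set of the CFI graph `G_k^{(ℓ)}`: pairs `(a, v)` (with `a : Fin (k+1)` encoding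
`a+1 ∈ {1,…,k+1}` and `v : Fin k → Bool` encoding a bit string indexed by `{1,…,k}`)
such that `v` has an even number of `1`'s when `a+1 ∈ {1,…,k−ℓ+1}` (i.e. `a + ℓ ≤ k`)
and an odd number of `1`'s when `a+1 ∈ {k−ℓ+2,…,k+1}`. -/
def cfiVertexSet (k ℓ : ℕ) : Set (Fin (k+1) × (Fin k → Bool)) :=
  {p | if p.1.val + ℓ ≤ k then Even (cfiOnes p.2) else Odd (cfiOnes p.2)}

/-- The CFI adjacency relation: `(a, v)` and `(a', v')` are related iff there is
`m ∈ {1,…,k}` (encoded as `m : Fin k`, with value `m+1`) such that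
`a' ≡ a + m (mod k+1)` and `v_m = v'_{k−m+1}` (the index `k−m+1` is `m.rev`). -/
def cfiAdjRel (k : ℕ) (p q : Fin (k+1) × (Fin k → Bool)) : Prop :=
  ∃ m : Fin k,
    (q.1.val : ZMod (k+1)) = (p.1.val : ZMod (k+1)) + ((m.val + 1 : ℕ) : ZMod (k+1)) ∧
    p.2 m = q.2 m.rev

/-- The CFI graph `G_k^{(ℓ)}`: the graph on `cfiVertexSet k ℓ` induced by the
(symmetrized) CFI adjacency relation. -/
def cfiGraph (k ℓ : ℕ) : SimpleGraph ↥(cfiVertexSet k ℓ) :=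
  SimpleGraph.induce (cfiVertexSet k ℓ) (SimpleGraph.fromRel (cfiAdjRel k))

/-- The bits to be switched at position `a`: index `0` at `s` and index `k - 1` at `s + 1`, which
are the indices of the edge `{s, s + 1}` as seen from its two endpoints. -/
def cfiMask (k s : ℕ) (a : Fin (k + 1)) (i : Fin k) : Bool :=
  decide ((a.val = s ∧ i.val = 0) ∨ (a.val = s + 1 ∧ i.val + 1 = k))

/-- Switching the edge `{s, s + 1}`, as a permutation of all pairs `(a, v)`. -/
def cfiFlip (k s : ℕ) : Equiv.Perm (Fin (k + 1) × (Fin k → Bool)) :=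
  Function.Involutive.toPerm (fun p => (p.1, fun i => xor (p.2 i) (cfiMask k s p.1 i)))
    (fun p => by ext <;> simp)

lemma cfiOnes_xor_even {k : ℕ} (v w : Fin k → Bool) :
    Even (cfiOnes fun i => xor (v i) (w i)) ↔ (Even (cfiOnes v) ↔ Even (cfiOnes w)) := by
  have cast_ones : ∀ u : Fin k → Bool,
      (cfiOnes u : ZMod 2) = ∑ i, if u i = true then (1 : ZMod 2) else 0 := by
    intro u
    simp [cfiOnes]
  rw [← Nat.even_add, ← ZMod.natCast_eq_zero_iff_even, ← ZMod.natCast_eq_zero_iff_even,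
    Nat.cast_add, cast_ones, cast_ones, cast_ones, ← Finset.sum_add_distrib]
  have sum_eq : ∀ i, (if xor (v i) (w i) = true then (1 : ZMod 2) else 0)
      = (if v i = true then (1 : ZMod 2) else 0) + (if w i = true then (1 : ZMod 2) else 0) := by
    intro i
    cases v i <;> cases w i <;> decide
  rw [Finset.sum_congr rfl fun i _ => sum_eq i]

lemma cfiMask_even (k s : ℕ) (hk : 1 ≤ k) (a : Fin (k + 1)) :
    Even (cfiOnes (cfiMask k s a)) ↔ ¬ (a.val = s ∨ a.val = s + 1) := by
  by_cases h0 : a.val = s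
  · have : cfiOnes (cfiMask k s a) = 1 := by
      refine Finset.card_eq_one.2 ⟨⟨0, by omega⟩, ?_⟩
      ext i
      simp [cfiMask, h0, Fin.ext_iff]
    simp [this, h0]
  · by_cases h1 : a.val = s + 1
    · have : cfiOnes (cfiMask k s a) = 1 := by
        refine Finset.card_eq_one.2 ⟨⟨k - 1, by omega⟩, ?_⟩
        ext i
        simp [cfiMask, h1, Fin.ext_iff]
        omega
      simp [this, h1]
    · have : cfiOnes (cfiMask k s a) = 0 := by
        simp [cfiOnes, cfiMask, h0, h1]
      simp [this, h0, h1]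

/-- The two endpoints of any edge agree on whether its bit is switched. -/
lemma cfiMask_rev (k s : ℕ) (hs : s + 1 ≤ k) (a b : Fin (k + 1)) (m : Fin k)
    (h : (b.val : ZMod (k + 1)) = (a.val : ZMod (k + 1)) + ((m.val + 1 : ℕ) : ZMod (k + 1))) :
    cfiMask k s a m = cfiMask k s b m.rev := by
  have hmod : b.val = (a.val + (m.val + 1)) % (k + 1) := by
    rw [← Nat.cast_add, ZMod.natCast_eq_natCast_iff'] at h
    rwa [Nat.mod_eq_of_lt b.isLt] at h
  have hb : b.val = a.val + m.val + 1 ∨ b.val + (k + 1) = a.val + m.val + 1 := by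
    have := a.isLt
    have := m.isLt
    by_cases hlt : a.val + (m.val + 1) < k + 1
    · rw [Nat.mod_eq_of_lt hlt] at hmod
      omega
    · rw [Nat.mod_eq_sub_mod (by omega), Nat.mod_eq_of_lt (by omega)] at hmod
      omega
  have := a.isLt
  have := b.isLt
  have := m.isLt
  simp only [cfiMask, Fin.val_rev, decide_eq_decide]
  omega

lemma cfiAdjRel_flip (k s : ℕ) (hs : s + 1 ≤ k) (p q : Fin (k + 1) × (Fin k → Bool)) :
    cfiAdjRel k (cfiFlip k s p) (cfiFlip k s q) ↔ cfiAdjRel k p q := by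
  refine exists_congr fun m => and_congr_right fun h => ?_
  have hm := cfiMask_rev k s hs p.1 q.1 m h
  change xor (p.2 m) (cfiMask k s p.1 m) = xor (q.2 m.rev) (cfiMask k s q.1 m.rev) ↔ _
  rw [hm]
  exact Bool.xor_left_inj

lemma cfi_step (k ℓ : ℕ) (h : ℓ + 2 ≤ k + 1) :
    Nonempty (cfiGraph k ℓ ≃g cfiGraph k (ℓ + 2)) := by
  obtain ⟨s, hs⟩ : ∃ s, s + ℓ + 1 = k := ⟨k - ℓ - 1, by omega⟩
  have hmem : ∀ p, p ∈ cfiVertexSet k ℓ ↔ cfiFlip k s p ∈ cfiVertexSet k (ℓ + 2) := by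
    intro p
    change (if p.1.val + ℓ ≤ k then _ else _) ↔
      (if p.1.val + (ℓ + 2) ≤ k then Even (cfiOnes fun i => xor (p.2 i) (cfiMask k s p.1 i))
        else Odd (cfiOnes fun i => xor (p.2 i) (cfiMask k s p.1 i)))
    simp only [← Nat.not_even_iff_odd, cfiOnes_xor_even, cfiMask_even k s (by omega)]
    by_cases h1 : p.1.val + (ℓ + 2) ≤ k
    · have h2 : p.1.val + ℓ ≤ k := by omega
      have h3 : ¬ (p.1.val = s ∨ p.1.val = s + 1) := by omega
      simp only [h1, h2, h3, if_true]
      tauto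
    · by_cases h2 : p.1.val + ℓ ≤ k
      · have h3 : p.1.val = s ∨ p.1.val = s + 1 := by omega
        simp only [h1, h2, h3, if_true, if_false]
        tauto
      · have h3 : ¬ (p.1.val = s ∨ p.1.val = s + 1) := by omega
        simp only [h1, h2, h3, if_false]
        tauto
  refine ⟨⟨(cfiFlip k s).subtypeEquiv hmem, ?_⟩⟩
  intro p q
  change (SimpleGraph.fromRel (cfiAdjRel k)).Adj (cfiFlip k s p) (cfiFlip k s q) ↔
    (SimpleGraph.fromRel (cfiAdjRel k)).Adj p q
  simp only [SimpleGraph.fromRel_adj, cfiAdjRel_flip k s (by omega), ne_eq,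
    EmbeddingLike.apply_eq_iff_eq]

lemma cfi_iterate (k ℓ n : ℕ) (h : ℓ + 2 * n ≤ k + 1) :
    Nonempty (cfiGraph k ℓ ≃g cfiGraph k (ℓ + 2 * n)) := by
  induction n with
  | zero => exact ⟨SimpleGraph.Iso.refl⟩
  | succ n ih =>
    obtain ⟨f⟩ := ih (by omega)
    obtain ⟨g⟩ := cfi_step k (ℓ + 2 * n) (by omega)
    exact ⟨f.trans g⟩

/-- For every integer `k ≥ 2` and all `ℓ, ℓ' ∈ {0,1,…,k+1}` with
`ℓ ≡ ℓ' (mod 2)`, the CFI graphs `G_k^{(ℓ)}` and `G_k^{(ℓ')}` are isomorphic.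
(In particular `G_k^{(ℓ)} ≅ G_k^{(ℓ+2)}` for every `ℓ ∈ {0,…,k−1}`.) -/
theorem cfi_iso_of_parity (k ℓ ℓ' : ℕ) (hk : 2 ≤ k) (hl : ℓ ≤ k + 1) (hl' : ℓ' ≤ k + 1)
    (hpar : ℓ % 2 = ℓ' % 2) :
    Nonempty ((cfiGraph k ℓ) ≃g (cfiGraph k ℓ')) := by
  rcases le_total ℓ ℓ' with hle | hle
  · obtain ⟨n, rfl⟩ : ∃ n, ℓ' = ℓ + 2 * n := ⟨(ℓ' - ℓ) / 2, by omega⟩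
    exact cfi_iterate k ℓ n hl'
  · obtain ⟨n, rfl⟩ : ∃ n, ℓ = ℓ' + 2 * n := ⟨(ℓ - ℓ') / 2, by omega⟩
    obtain ⟨f⟩ := cfi_iterate k ℓ' n hl
    exact ⟨f.symm⟩
end

section
/- For every integer k ≥ 2, the CFI graph G_k^{(1)} contains no (k+1)-clique. -/
/-- The congruence in the adjacency relation, as an equation in `Fin (k+1)`: the shift by
`m + 1` is addition of `m.succ`. -/
lemma cfi_shift_iff {k : ℕ} (a b : Fin (k+1)) (m : Fin k) :
    (b.val : ZMod (k+1)) = (a.val : ZMod (k+1)) + ((m.val + 1 : ℕ) : ZMod (k+1)) ↔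
      b = a + m.succ := by
  rw [← Nat.cast_add, ZMod.natCast_eq_natCast_iff', Fin.ext_iff, Fin.val_add,
    Nat.mod_eq_of_lt b.isLt, Fin.val_succ]

lemma fin_add_succ_ne {k : ℕ} (a : Fin (k+1)) (m : Fin k) : a + m.succ ≠ a := by
  intro h
  exact Fin.succ_ne_zero m (left_eq_add.1 h.symm)

lemma fin_succ_add_rev_succ {k : ℕ} (m : Fin k) : m.succ + m.rev.succ = (0 : Fin (k+1)) := by
  have h : m.val + 1 + (k - (m.val + 1) + 1) = k + 1 := by have := m.isLt; omega
  rw [Fin.ext_iff, Fin.val_add, Fin.val_succ, Fin.val_succ, Fin.val_rev, h]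
  simp

/-- If two vertices are related in either direction, then the bits they assign to each other
agree; the shift `m` from `p` to `q` is unique, and the one from `q` to `p` is `m.rev`. -/
lemma cfiAdjRel_bit {k : ℕ} {p q : Fin (k+1) × (Fin k → Bool)} {m : Fin k}
    (h : cfiAdjRel k p q ∨ cfiAdjRel k q p) (hm : q.1 = p.1 + m.succ) :
    p.2 m = q.2 m.rev := by
  rcases h with ⟨n, hn, hb⟩ | ⟨n, hn, hb⟩
  · rw [cfi_shift_iff, hm] at hn
    rw [Fin.succ_injective _ (add_left_cancel hn)]
    exact hb
  · rw [cfi_shift_iff, hm, add_assoc, left_eq_add] at hn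
    -- Both `n` and `m.rev` are the shift leading from `q` back to `p`.
    have : n.succ = m.rev.succ := add_left_cancel (hn.trans (fin_succ_add_rev_succ m).symm)
    rw [Fin.succ_injective _ this, Fin.rev_rev] at hb
    exact hb.symm

lemma cfiAdjRel_fst_ne {k : ℕ} {p q : Fin (k+1) × (Fin k → Bool)} (h : cfiAdjRel k p q) :
    q.1 ≠ p.1 := by
  obtain ⟨m, hm, -⟩ := h
  rw [(cfi_shift_iff _ _ _).1 hm]
  exact fin_add_succ_ne _ _

lemma cfiOnes_cast {k : ℕ} (v : Fin k → Bool) :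
    (cfiOnes v : ZMod 2) = ∑ m, if v m = true then 1 else 0 := by
  simp [cfiOnes]

/-- Pairing each bit with its partner, the total number of ones is even. -/
lemma sum_bits_eq_zero {k : ℕ} (v : Fin (k+1) → Fin k → Bool)
    (hv : ∀ a m, v a m = v (a + m.succ) m.rev) :
    ∑ a, (cfiOnes (v a) : ZMod 2) = 0 := by
  simp_rw [cfiOnes_cast]
  rw [← Fintype.sum_prod_type' (f := fun a m => if v a m = true then (1 : ZMod 2) else 0)]
  refine Finset.sum_involution (fun x _ => (x.1 + x.2.succ, x.2.rev)) ?_ ?_ ?_ ?_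
  · rintro ⟨a, m⟩ -
    simp only [← hv a m]
    exact CharTwo.add_self_eq_zero _
  · rintro ⟨a, m⟩ - - h
    exact fin_add_succ_ne a m (congrArg Prod.fst h)
  · intros
    exact Finset.mem_univ _
  · rintro ⟨a, m⟩ -
    simp [add_assoc, fin_succ_add_rev_succ]

/-- For every `k ≥ 2`, the CFI graph `G_k^{(1)}` contains no `(k+1)`-clique. -/
theorem cfi_one_no_clique (k : ℕ) (hk : 2 ≤ k) :
    ∀ s : Finset ↥(cfiVertexSet k 1), ¬ (cfiGraph k 1).IsNClique (k + 1) s := by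
  intro s hs
  have hadj : ∀ x ∈ s, ∀ y ∈ s, x ≠ y →
      cfiAdjRel k x.1 y.1 ∨ cfiAdjRel k y.1 x.1 := by
    intro x hx y hy hxy
    have h := hs.isClique hx hy hxy
    simp only [cfiGraph, SimpleGraph.comap_adj, SimpleGraph.fromRel_adj] at h
    exact h.2
  have hinj : Set.InjOn (fun x : ↥(cfiVertexSet k 1) => x.1.1) s := by
    intro x hx y hy hxy
    by_contra hne
    rcases hadj x hx y hy hne with h | h
    · exact cfiAdjRel_fst_ne h hxy.symm
    · exact cfiAdjRel_fst_ne h hxy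
  have himg : s.image (fun x : ↥(cfiVertexSet k 1) => x.1.1) = Finset.univ := by
    rw [← Finset.card_eq_iff_eq_univ, Finset.card_image_of_injOn hinj, hs.card_eq,
      Fintype.card_fin]
  have hsurj : ∀ a : Fin (k+1), ∃ x ∈ s, x.1.1 = a := by
    intro a
    simpa using (himg ▸ Finset.mem_univ a :
      a ∈ s.image (fun x : ↥(cfiVertexSet k 1) => x.1.1))
  choose w hws hwa using hsurj
  have hzero := sum_bits_eq_zero (fun a => (w a).1.2) (by
    intro a m
    refine cfiAdjRel_bit (hadj _ (hws a) _ (hws (a + m.succ)) ?_) (by rw [hwa, hwa])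
    intro h
    have h' := congrArg (fun x => x.1.1) h
    simp only [hwa] at h'
    exact fin_add_succ_ne a m h'.symm)
  have hpar : ∀ a : Fin (k+1), if a.val + 1 ≤ k then Even (cfiOnes (w a).1.2)
      else Odd (cfiOnes (w a).1.2) := by
    intro a
    have h := (w a).2
    simpa only [cfiVertexSet, Set.mem_ofPred_eq, hwa] using h
  rw [Fin.sum_univ_castSucc, Finset.sum_eq_zero, zero_add] at hzero
  · have h := hpar (Fin.last k)
    rw [if_neg (by simp)] at h
    rw [ZMod.natCast_eq_zero_iff_even] at hzero
    exact Nat.not_even_iff_odd.2 h hzero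
  · intro a _
    have h := hpar a.castSucc
    rw [if_pos (by simp)] at h
    exact (ZMod.natCast_eq_zero_iff_even).2 h
end

section
/- The 4×4 Rook's graph and the Shrikhande graph are not isomorphic: the Rook's graph contains a 4-clique while the Shrikhande graph does not. -/
/-!
A row of the board is a 4-clique in the Rook's graph. The Shrikhande graph is a Cayley graph, so a
4-clique in it could be translated to contain `0`, and its other three vertices would form a
triangle inside the neighbourhood of `0`; that neighbourhood is a 6-cycle
(`shrikhandeConn_triangle_free`). Since isomorphisms carry 4-cliques to 4-cliques, the two graphs
are not isomorphic.
-/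

/-- The 4×4 Rook's graph: the simple graph on `Fin 4 × Fin 4` in which two distinct
vertices are adjacent iff they agree in the first or in the second coordinate. -/
def rookGraph : SimpleGraph (Fin 4 × Fin 4) :=
  SimpleGraph.fromRel (fun u v => u.1 = v.1 ∨ u.2 = v.2)

/-- The Shrikhande graph: the simple graph on `ZMod 4 × ZMod 4` in which two distinct
vertices `u`, `v` are adjacent iff `u − v ∈ {(1,0), (−1,0), (0,1), (0,−1), (1,1), (−1,−1)}`. -/
def shrikhandeGraph : SimpleGraph (ZMod 4 × ZMod 4) :=
  SimpleGraph.fromRel (fun u v =>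
    u - v ∈ ({(1,0), (-1,0), (0,1), (0,-1), (1,1), (-1,-1)} : Set (ZMod 4 × ZMod 4)))

/-- The connection set of the Shrikhande graph, viewed as a Cayley graph on `(ℤ/4)²`; a `Finset`
so that membership is decidable. -/
def shrikhandeConn : Finset (ZMod 4 × ZMod 4) :=
  {(1,0), (-1,0), (0,1), (0,-1), (1,1), (-1,-1)}

lemma shrikhandeConn_neg : ∀ x ∈ shrikhandeConn, -x ∈ shrikhandeConn := by decide

lemma sub_mem_shrikhandeConn {u v : ZMod 4 × ZMod 4} (h : shrikhandeGraph.Adj u v) :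
    v - u ∈ shrikhandeConn := by
  have key : ∀ w : ZMod 4 × ZMod 4,
      w ∈ ({(1,0), (-1,0), (0,1), (0,-1), (1,1), (-1,-1)} : Set (ZMod 4 × ZMod 4)) →
        w ∈ shrikhandeConn := by
    intro w hw
    simpa [shrikhandeConn] using hw
  rcases ((SimpleGraph.fromRel_adj _ _ _).1 h).2 with h | h
  · simpa using shrikhandeConn_neg _ (key _ h)
  · exact key _ h

/-- The neighbourhood of `0` in the Shrikhande graph is a 6-cycle, hence triangle-free. -/
lemma shrikhandeConn_triangle_free :
    ∀ x ∈ shrikhandeConn, ∀ y ∈ shrikhandeConn, ∀ z ∈ shrikhandeConn,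
      ¬ (y - x ∈ shrikhandeConn ∧ z - x ∈ shrikhandeConn ∧ z - y ∈ shrikhandeConn) := by
  decide

lemma shrikhandeGraph_not_isNClique_four (s : Finset (ZMod 4 × ZMod 4)) :
    ¬ shrikhandeGraph.IsNClique 4 s := by
  intro hs
  obtain ⟨a, t, hat, rfl, ht⟩ := Finset.card_eq_succ.1 hs.card_eq
  obtain ⟨b, c, d, nbc, nbd, ncd, rfl⟩ := Finset.card_eq_three.1 ht
  simp only [Finset.mem_insert, Finset.mem_singleton, not_or] at hat
  have hab := hs.isClique (by simp) (by simp) hat.1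
  have hac := hs.isClique (by simp) (by simp) hat.2.1
  have had := hs.isClique (by simp) (by simp) hat.2.2
  have hbc := hs.isClique (by simp) (by simp) nbc
  have hbd := hs.isClique (by simp) (by simp) nbd
  have hcd := hs.isClique (by simp) (by simp) ncd
  -- Translating `a` to `0` puts the other three vertices in the neighbourhood of `0`.
  refine shrikhandeConn_triangle_free _ (sub_mem_shrikhandeConn hab) _
    (sub_mem_shrikhandeConn hac) _ (sub_mem_shrikhandeConn had) ?_
  simp only [sub_sub_sub_cancel_right]
  exact ⟨sub_mem_shrikhandeConn hbc, sub_mem_shrikhandeConn hbd, sub_mem_shrikhandeConn hcd⟩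

/-- The row `{0} × Fin 4` is a clique. -/
lemma rookGraph_isNClique_row :
    rookGraph.IsNClique 4 (({0} : Finset (Fin 4)) ×ˢ (Finset.univ : Finset (Fin 4))) := by
  refine ⟨?_, by simp⟩
  intro u hu v hv huv
  simp only [Finset.coe_product, Finset.coe_singleton, Set.mem_prod, Set.mem_singleton_iff] at hu hv
  exact (SimpleGraph.fromRel_adj _ _ _).2 ⟨huv, .inl (.inl (hu.1.trans hv.1.symm))⟩

/-- The 4×4 Rook's graph and the Shrikhande graph are not isomorphic:
the Rook's graph contains a 4-clique while the Shrikhande graph does not, so no graph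
isomorphism between them exists. -/
theorem rookGraph_not_iso_shrikhandeGraph :
    (∃ s : Finset (Fin 4 × Fin 4), rookGraph.IsNClique 4 s) ∧
    (∀ s : Finset (ZMod 4 × ZMod 4), ¬ shrikhandeGraph.IsNClique 4 s) ∧
    IsEmpty (rookGraph ≃g shrikhandeGraph) := by
  refine ⟨⟨_, rookGraph_isNClique_row⟩, shrikhandeGraph_not_isNClique_four, ⟨fun e => ?_⟩⟩
  have hfree : shrikhandeGraph.CliqueFree 4 := shrikhandeGraph_not_isNClique_four
  exact hfree.comap e.isContained _ rookGraph_isNClique_row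
end
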